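/- Consensus is reached among all occupied nodes: there exists v ∈ ℝ such that x̂_i(t) → v as t → ∞ for every compute node i, and moreover both max{ x̂_i(t) : i occupied at time t } and min{ x̂_i(t) : i occupied at time t } converge to v. -/

import Mathlib

open Matrix Filter BigOperators
open scoped Classical

noncomputable section

/-- A directed graph on `Fin n` with `m` directed edges, edge `e` going from
`src e` to `tgt e`. -/
structure DGraph (n m : ℕ) where
  src : Fin m → Fin n
  tgt : Fin m → Fin n

/-- Hypotheses of the random-delay consensus model: no self-loops, distinct edges,
`P` row stochastic respecting `G` (hence with positive diagonal), and `G` strongly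
connected. -/
structure DGraph.Valid {n m : ℕ} (G : DGraph n m) (P : Matrix (Fin n) (Fin n) ℝ) : Prop where
  noSelf : ∀ e, G.src e ≠ G.tgt e
  edgeInj : ∀ e e', G.src e = G.src e' → G.tgt e = G.tgt e' → e = e'
  nonneg : ∀ i j, 0 ≤ P i j
  rowSum : ∀ i, ∑ j, P i j = 1
  support : ∀ i j, 0 < P i j ↔ i = j ∨ ∃ e, G.src e = j ∧ G.tgt e = i
  connected : ∀ i j : Fin n,
    Relation.ReflTransGen (fun a b => ∃ e, G.src e = a ∧ G.tgt e = b) i j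

/-- Delay nodes: for every directed edge `e : Fin m`, every chain-length index
`ℓ : Fin B` (the parallel chain modelling a delay of `ℓ.1 + 1`), and every
position `k : Fin B` with `k ≤ ℓ` along that chain.  There are `m·B(B+1)/2`
of them in total. -/
def DelayNode (m B : ℕ) : Type :=
  {q : Fin m × Fin B × Fin B // q.2.2.1 ≤ q.2.1.1}

instance (m B : ℕ) : Fintype (DelayNode m B) := by
  unfold DelayNode; infer_instance

instance (m B : ℕ) : DecidableEq (DelayNode m B) := by
  unfold DelayNode; infer_instance

namespace RandomDelay

variable {n m B : ℕ}

/-- The edge a delay node belongs to. -/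
def edgeOf (d : DelayNode m B) : Fin m := d.val.1
/-- The chain (of length `lenIdx d + 1`) a delay node belongs to. -/
def lenIdx (d : DelayNode m B) : ℕ := d.val.2.1.1
/-- The (0-indexed) position of a delay node along its chain. -/
def posIdx (d : DelayNode m B) : ℕ := d.val.2.2.1
/-- `d` is the terminal node of its chain. -/
def isTerminal (d : DelayNode m B) : Prop := d.val.2.2 = d.val.2.1

/-- The fixed block-diagonal forward-shift matrix `C`: a message at position `k`
of a chain moves to position `k+1` of the same chain. -/
def Cmat (m B : ℕ) : Matrix (DelayNode m B) (DelayNode m B) ℝ := fun d d' =>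
  if d.val.1 = d'.val.1 ∧ d.val.2.1 = d'.val.2.1 ∧ posIdx d = posIdx d' + 1 then 1 else 0

/-- The fixed delivery matrix `J`: `J i d = 1` iff `d` is the terminal node of a
chain on an edge pointing into compute node `i`. -/
def Jmat (G : DGraph n m) (B : ℕ) : Matrix (Fin n) (DelayNode m B) ℝ := fun i d =>
  if G.tgt (edgeOf d) = i ∧ isTerminal d then 1 else 0

/-- `L(t)`: zero-delay deliveries.  `L t i j = 1` iff at iteration `t` node `j`
sends its message on the edge `j → i` with zero delay. -/
def Lmat (G : DGraph n m) (del : ℕ → Fin m → Fin (B + 1)) (t : ℕ) :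
    Matrix (Fin n) (Fin n) ℝ := fun i j =>
  if ∃ e, G.src e = j ∧ G.tgt e = i ∧ (del t e).1 = 0 then 1 else 0

/-- `R(t)`: routing of messages into delay chains.  `R t d j = 1` iff `d` is the
first node of the chain of length `ℓ+1` on an edge out of `j`, and at iteration
`t` node `j`'s message on that edge is assigned delay `ℓ+1`. -/
def Rmat (G : DGraph n m) (del : ℕ → Fin m → Fin (B + 1)) (t : ℕ) :
    Matrix (DelayNode m B) (Fin n) ℝ := fun d j =>
  if G.src (edgeOf d) = j ∧ posIdx d = 0 ∧ (del t (edgeOf d)).1 = lenIdx d + 1 then 1 else 0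

/-- Occupancy vector: `φ 0 = 0` and `φ t = R(t)·1 + C·φ(t-1)`. -/
def phi (G : DGraph n m) (del : ℕ → Fin m → Fin (B + 1)) : ℕ → DelayNode m B → ℝ
  | 0 => fun _ => 0
  | t + 1 => Rmat G del (t + 1) *ᵥ (fun _ => 1) + Cmat m B *ᵥ phi G del t

/-- `ŵ_{ij}(t)`: the number of delay chains from `j` to `i` whose terminal node is
occupied at time `t - 1`, i.e. the number of delayed messages `i` receives from `j`
at iteration `t`. -/
def wgt (G : DGraph n m) (del : ℕ → Fin m → Fin (B + 1)) (t : ℕ) (i j : Fin n) : ℕ :=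
  (Finset.univ.filter (fun d : DelayNode m B =>
    G.tgt (edgeOf d) = i ∧ G.src (edgeOf d) = j ∧ isTerminal d ∧
      phi G del (t - 1) d = 1)).card

/-- Total number of messages (delayed plus undelayed) that `i` receives from `j`
at iteration `t`, as a real number. -/
def denom (G : DGraph n m) (del : ℕ → Fin m → Fin (B + 1)) (t : ℕ) (i j : Fin n) : ℝ :=
  (wgt G del t i j : ℝ) + Lmat G del t i j

/-- `P̄[L(t)]`: each entry `1` of `L(t)` (a zero-delay message from `j` to `i`) is
replaced with the weight `P i j / (ŵ_{ij} + L_{ij}(t))`. -/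
def PLmat (G : DGraph n m) (P : Matrix (Fin n) (Fin n) ℝ)
    (del : ℕ → Fin m → Fin (B + 1)) (t : ℕ) : Matrix (Fin n) (Fin n) ℝ := fun i j =>
  Lmat G del t i j * (P i j / denom G del t i j)

/-- `P̄[φ(t-1)]`: each entry `1` of `J·diag(φ(t-1))` (a delayed message from `j`
delivered to `i`) is replaced with the weight `P i j / (ŵ_{ij} + L_{ij}(t))`. -/
def PFmat (G : DGraph n m) (P : Matrix (Fin n) (Fin n) ℝ)
    (del : ℕ → Fin m → Fin (B + 1)) (t : ℕ) : Matrix (Fin n) (DelayNode m B) ℝ := fun i d =>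
  Jmat G B i d * phi G del (t - 1) d *
    (P i (G.src (edgeOf d)) / denom G del t i (G.src (edgeOf d)))

/-- Top-left block `P̂₁₁(t) = I − diag(P̄[φ(t−1)]·1_b + P̄[L(t)]·1_n) + P̄[L(t)]`. -/
def P11 (G : DGraph n m) (P : Matrix (Fin n) (Fin n) ℝ)
    (del : ℕ → Fin m → Fin (B + 1)) (t : ℕ) : Matrix (Fin n) (Fin n) ℝ :=
  1 - Matrix.diagonal (fun i => (∑ d, PFmat G P del t i d) + (∑ j, PLmat G P del t i j))
    + PLmat G P del t

/-- The delayed transition matrix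
`P̂(t) = [[P̂₁₁(t), P̄[φ(t−1)]], [R(t), C]]`. -/
def Phat (G : DGraph n m) (P : Matrix (Fin n) (Fin n) ℝ)
    (del : ℕ → Fin m → Fin (B + 1)) (t : ℕ) :
    Matrix (Fin n ⊕ DelayNode m B) (Fin n ⊕ DelayNode m B) ℝ :=
  Matrix.fromBlocks (P11 G P del t) (PFmat G P del t) (Rmat G del t) (Cmat m B)

/-- The state: `x̂(0) = (x(0), 0_b)` and `x̂(t) = P̂(t)·x̂(t−1)`. -/
def xhat (G : DGraph n m) (P : Matrix (Fin n) (Fin n) ℝ)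
    (del : ℕ → Fin m → Fin (B + 1)) (x0 : Fin n → ℝ) :
    ℕ → (Fin n ⊕ DelayNode m B) → ℝ
  | 0 => Sum.elim x0 (fun _ => 0)
  | t + 1 => Phat G P del (t + 1) *ᵥ xhat G P del x0 t

/-- The product `M(t) = P̂(t)·P̂(t−1)⋯P̂(1)` (with `M(0) = I`). -/
def Mprod (G : DGraph n m) (P : Matrix (Fin n) (Fin n) ℝ)
    (del : ℕ → Fin m → Fin (B + 1)) :
    ℕ → Matrix (Fin n ⊕ DelayNode m B) (Fin n ⊕ DelayNode m B) ℝ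
  | 0 => 1
  | t + 1 => Phat G P del (t + 1) * Mprod G P del t

/-- Top-left `n × n` block of `M(t)`. -/
def M1 (G : DGraph n m) (P : Matrix (Fin n) (Fin n) ℝ)
    (del : ℕ → Fin m → Fin (B + 1)) (t : ℕ) : Matrix (Fin n) (Fin n) ℝ :=
  fun i j => Mprod G P del t (Sum.inl i) (Sum.inl j)

/-- Bottom-left `b × n` block of `M(t)`. -/
def M2 (G : DGraph n m) (P : Matrix (Fin n) (Fin n) ℝ)
    (del : ℕ → Fin m → Fin (B + 1)) (t : ℕ) : Matrix (DelayNode m B) (Fin n) ℝ :=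
  fun d j => Mprod G P del t (Sum.inr d) (Sum.inl j)

/-- A node is occupied at time `t` if it is a compute node, or a delay node `d`
with `φ_d(t) = 1`. -/
def occupied (G : DGraph n m) (del : ℕ → Fin m → Fin (B + 1)) (t : ℕ) :
    (Fin n ⊕ DelayNode m B) → Prop
  | Sum.inl _ => True
  | Sum.inr d => phi G del t d = 1

/-- Maximum of the state over the occupied nodes at time `t`. -/
def occMax (G : DGraph n m) (P : Matrix (Fin n) (Fin n) ℝ)
    (del : ℕ → Fin m → Fin (B + 1)) (x0 : Fin n → ℝ) (t : ℕ) : ℝ :=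
  sSup {y : ℝ | ∃ v, occupied G del t v ∧ xhat G P del x0 t v = y}

/-- Minimum of the state over the occupied nodes at time `t`. -/
def occMin (G : DGraph n m) (P : Matrix (Fin n) (Fin n) ℝ)
    (del : ℕ → Fin m → Fin (B + 1)) (x0 : Fin n → ℝ) (t : ℕ) : ℝ :=
  sInf {y : ℝ | ∃ v, occupied G del t v ∧ xhat G P del x0 t v = y}

end RandomDelay

end

namespace RandomDelay

variable {n m B : ℕ}

/-- The node preceding `d` on its chain (`d` itself at the start of the chain). -/
def prevNode (d : DelayNode m B) : DelayNode m B :=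
  ⟨(d.val.1, d.val.2.1, ⟨d.val.2.2.1 - 1, by have := d.val.2.2.2; omega⟩), by
    have := d.property
    simp only
    omega⟩

lemma delayNode_ext {d d' : DelayNode m B} (he : d.val.1 = d'.val.1)
    (hl : d.val.2.1 = d'.val.2.1) (hp : posIdx d = posIdx d') : d = d' :=
  Subtype.ext (Prod.ext he (Prod.ext hl (Fin.ext hp)))

lemma posIdx_prevNode (d : DelayNode m B) : posIdx (prevNode d) = posIdx d - 1 := rfl

lemma Cmat_mulVec (f : DelayNode m B → ℝ) (d : DelayNode m B) :
    (Cmat m B *ᵥ f) d = if posIdx d = 0 then 0 else f (prevNode d) := by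
  simp only [mulVec, dotProduct, Cmat, ite_mul, one_mul, zero_mul]
  split_ifs with h
  · refine Finset.sum_eq_zero fun d' _ => if_neg ?_
    rintro ⟨-, -, h'⟩
    omega
  · rw [Finset.sum_eq_single (prevNode d)]
    · refine if_pos ⟨rfl, rfl, ?_⟩
      rw [posIdx_prevNode]
      omega
    · intro d' _ hne
      refine if_neg ?_
      rintro ⟨he, hl, hp⟩
      refine hne (delayNode_ext he.symm hl.symm ?_)
      rw [posIdx_prevNode]
      omega
    · simp

lemma Rmat_mulVec (G : DGraph n m) (del : ℕ → Fin m → Fin (B + 1)) (t : ℕ)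
    (f : Fin n → ℝ) (d : DelayNode m B) :
    (Rmat G del t *ᵥ f) d =
      if posIdx d = 0 ∧ (del t (edgeOf d)).1 = lenIdx d + 1 then f (G.src (edgeOf d)) else 0 := by
  simp only [mulVec, dotProduct, Rmat, ite_mul, one_mul, zero_mul]
  split_ifs with h
  · simp [h]
  · exact Finset.sum_eq_zero fun j _ => if_neg fun h' => h h'.2

lemma phi_succ (G : DGraph n m) (del : ℕ → Fin m → Fin (B + 1)) (t : ℕ) (d : DelayNode m B) :
    phi G del (t + 1) d =
      if posIdx d = 0 then (if (del (t + 1) (edgeOf d)).1 = lenIdx d + 1 then 1 else 0)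
      else phi G del t (prevNode d) := by
  rw [phi, Pi.add_apply, Cmat_mulVec, Rmat_mulVec]
  by_cases h : posIdx d = 0 <;> simp [h]

lemma phi_eq_zero_or_one (G : DGraph n m) (del : ℕ → Fin m → Fin (B + 1)) (t : ℕ) :
    ∀ d : DelayNode m B, phi G del t d = 0 ∨ phi G del t d = 1 := by
  induction t with
  | zero => exact fun _ => Or.inl rfl
  | succ t ih =>
    intro d
    rw [phi_succ]
    split_ifs
    · exact Or.inr rfl
    · exact Or.inl rfl
    · exact ih _

lemma phi_eq_ite (G : DGraph n m) (del : ℕ → Fin m → Fin (B + 1)) (t : ℕ) (d : DelayNode m B) :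
    phi G del t d = if phi G del t d = 1 then 1 else 0 := by
  rcases phi_eq_zero_or_one G del t d with h | h <;> simp [h]

lemma xhat_succ_inr (G : DGraph n m) (P : Matrix (Fin n) (Fin n) ℝ)
    (del : ℕ → Fin m → Fin (B + 1)) (x0 : Fin n → ℝ) (t : ℕ) (d : DelayNode m B) :
    xhat G P del x0 (t + 1) (Sum.inr d) =
      if posIdx d = 0 then
        (if (del (t + 1) (edgeOf d)).1 = lenIdx d + 1
          then xhat G P del x0 t (Sum.inl (G.src (edgeOf d))) else 0)
      else xhat G P del x0 t (Sum.inr (prevNode d)) := by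
  rw [xhat, Phat, fromBlocks_mulVec, Sum.elim_inr, Pi.add_apply, Cmat_mulVec, Rmat_mulVec]
  by_cases h : posIdx d = 0 <;> simp [h]

/-- The message held by an occupied delay node at position `p` was sent `p + 1` steps earlier. -/
lemma exists_sent_of_phi_eq_one (G : DGraph n m) (P : Matrix (Fin n) (Fin n) ℝ)
    (del : ℕ → Fin m → Fin (B + 1)) (x0 : Fin n → ℝ) (t : ℕ) :
    ∀ d : DelayNode m B, phi G del t d = 1 → ∃ s, s + posIdx d + 1 = t ∧
      xhat G P del x0 t (Sum.inr d) = xhat G P del x0 s (Sum.inl (G.src (edgeOf d))) := by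
  induction t with
  | zero => intro d h; simp [phi] at h
  | succ t ih =>
    intro d h
    rw [phi_succ] at h
    rw [xhat_succ_inr]
    split_ifs at h ⊢ with h0 h1
    · exact ⟨t, by omega, rfl⟩
    · simp at h
    · obtain ⟨s, hs, hx⟩ := ih _ h
      rw [posIdx_prevNode] at hs
      exact ⟨s, by omega, hx⟩

lemma Lmat_nonneg (G : DGraph n m) (del : ℕ → Fin m → Fin (B + 1)) (t : ℕ) (i j : Fin n) :
    0 ≤ Lmat G del t i j := by
  unfold Lmat; split_ifs <;> norm_num

lemma denom_nonneg (G : DGraph n m) (del : ℕ → Fin m → Fin (B + 1)) (t : ℕ) (i j : Fin n) :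
    0 ≤ denom G del t i j :=
  add_nonneg (Nat.cast_nonneg _) (Lmat_nonneg G del t i j)

lemma denom_le (G : DGraph n m) (del : ℕ → Fin m → Fin (B + 1)) (t : ℕ) (i j : Fin n) :
    denom G del t i j ≤ Fintype.card (DelayNode m B) + 1 := by
  unfold denom
  refine add_le_add ?_ ?_
  · exact_mod_cast Finset.card_le_univ _
  · unfold Lmat; split_ifs <;> norm_num

lemma PLmat_nonneg {G : DGraph n m} {P : Matrix (Fin n) (Fin n) ℝ} (hV : G.Valid P)
    (del : ℕ → Fin m → Fin (B + 1)) (t : ℕ) (i j : Fin n) : 0 ≤ PLmat G P del t i j :=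
  mul_nonneg (Lmat_nonneg ..) (div_nonneg (hV.nonneg i j) (denom_nonneg ..))

lemma PFmat_nonneg {G : DGraph n m} {P : Matrix (Fin n) (Fin n) ℝ} (hV : G.Valid P)
    (del : ℕ → Fin m → Fin (B + 1)) (t : ℕ) (i : Fin n) (d : DelayNode m B) :
    0 ≤ PFmat G P del t i d := by
  refine mul_nonneg (mul_nonneg ?_ ?_) (div_nonneg (hV.nonneg _ _) (denom_nonneg ..))
  · unfold Jmat; split_ifs <;> norm_num
  · rcases phi_eq_zero_or_one G del (t - 1) d with h | h <;> simp [h]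

lemma sum_PFmat (G : DGraph n m) (P : Matrix (Fin n) (Fin n) ℝ)
    (del : ℕ → Fin m → Fin (B + 1)) (t : ℕ) (i : Fin n) :
    ∑ d, PFmat G P del t i d = ∑ j, (wgt G del t i j : ℝ) * (P i j / denom G del t i j) := by
  rw [← Finset.sum_fiberwise Finset.univ (fun d : DelayNode m B => G.src (edgeOf d))]
  refine Finset.sum_congr rfl fun j _ => ?_
  rw [wgt, Finset.card_eq_sum_ones, Nat.cast_sum, Finset.sum_mul, Finset.sum_filter,
    Finset.sum_filter]
  refine Finset.sum_congr rfl fun d _ => ?_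
  rw [PFmat, Jmat, phi_eq_ite]
  by_cases hj : G.src (edgeOf d) = j
  · by_cases hi : G.tgt (edgeOf d) = i <;> by_cases ht : isTerminal d <;>
      by_cases hp : phi G del (t - 1) d = 1 <;> simp [hi, hj, ht, hp]
  · simp [hj]

lemma denom_self {G : DGraph n m} {P : Matrix (Fin n) (Fin n) ℝ} (hV : G.Valid P)
    (del : ℕ → Fin m → Fin (B + 1)) (t : ℕ) (i : Fin n) : denom G del t i i = 0 := by
  have hw : wgt G del t i i = 0 := by
    rw [wgt, Finset.card_eq_zero, Finset.filter_eq_empty_iff]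
    rintro d - ⟨h1, h2, -⟩
    exact hV.noSelf _ (h2.trans h1.symm)
  have hL : Lmat G del t i i = 0 := by
    refine if_neg ?_
    rintro ⟨e, h1, h2, -⟩
    exact hV.noSelf _ (h1.trans h2.symm)
  simp [denom, hw, hL]

lemma sum_received_weight_le {G : DGraph n m} {P : Matrix (Fin n) (Fin n) ℝ} (hV : G.Valid P)
    (del : ℕ → Fin m → Fin (B + 1)) (t : ℕ) (i : Fin n) :
    (∑ d, PFmat G P del t i d) + (∑ j, PLmat G P del t i j) ≤ 1 - P i i := by
  have hsum : (∑ d, PFmat G P del t i d) + (∑ j, PLmat G P del t i j) =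
      ∑ j, denom G del t i j * (P i j / denom G del t i j) := by
    rw [sum_PFmat, ← Finset.sum_add_distrib]
    refine Finset.sum_congr rfl fun j _ => ?_
    rw [PLmat, ← add_mul]
    rfl
  have hrow := hV.rowSum i
  rw [← Finset.add_sum_erase _ _ (Finset.mem_univ i)] at hrow
  rw [hsum, ← Finset.add_sum_erase _ _ (Finset.mem_univ i), denom_self hV, zero_mul, zero_add]
  refine (Finset.sum_le_sum fun j _ => ?_).trans (le_sub_iff_add_le'.2 hrow.le)
  by_cases h : denom G del t i j = 0
  · simpa [h] using hV.nonneg i j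
  · exact (mul_div_cancel₀ _ h).le

lemma le_P11_self {G : DGraph n m} {P : Matrix (Fin n) (Fin n) ℝ} (hV : G.Valid P)
    (del : ℕ → Fin m → Fin (B + 1)) (t : ℕ) (i : Fin n) : P i i ≤ P11 G P del t i i := by
  have h1 := sum_received_weight_le hV del t i
  have h2 := PLmat_nonneg hV del t i i
  simp only [P11, Matrix.add_apply, Matrix.sub_apply, one_apply_eq, diagonal_apply_eq]
  linarith

lemma P11_of_ne (G : DGraph n m) (P : Matrix (Fin n) (Fin n) ℝ)
    (del : ℕ → Fin m → Fin (B + 1)) (t : ℕ) {i j : Fin n} (h : i ≠ j) :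
    P11 G P del t i j = PLmat G P del t i j := by
  simp [P11, one_apply_ne h, diagonal_apply_ne _ h]

lemma P11_nonneg {G : DGraph n m} {P : Matrix (Fin n) (Fin n) ℝ} (hV : G.Valid P)
    (del : ℕ → Fin m → Fin (B + 1)) (t : ℕ) (i j : Fin n) : 0 ≤ P11 G P del t i j := by
  by_cases h : i = j
  · subst h
    exact (hV.nonneg i i).trans (le_P11_self hV del t i)
  · rw [P11_of_ne _ _ _ _ h]
    exact PLmat_nonneg hV del t i j

lemma Phat_inl_nonneg {G : DGraph n m} {P : Matrix (Fin n) (Fin n) ℝ} (hV : G.Valid P)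
    (del : ℕ → Fin m → Fin (B + 1)) (t : ℕ) (i : Fin n) (v : Fin n ⊕ DelayNode m B) :
    0 ≤ Phat G P del t (Sum.inl i) v := by
  rcases v with j | d
  · exact P11_nonneg hV del t i j
  · exact PFmat_nonneg hV del t i d

lemma sum_Phat_inl (G : DGraph n m) (P : Matrix (Fin n) (Fin n) ℝ)
    (del : ℕ → Fin m → Fin (B + 1)) (t : ℕ) (i : Fin n) :
    ∑ v, Phat G P del t (Sum.inl i) v = 1 := by
  simp only [Phat, Fintype.sum_sum_type, fromBlocks_apply₁₁, fromBlocks_apply₁₂, P11, Matrix.add_apply,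
    Matrix.sub_apply, Finset.sum_add_distrib, Finset.sum_sub_distrib, one_apply, diagonal_apply,
    Finset.sum_ite_eq, Finset.mem_univ, if_true]
  ring

lemma Phat_inl_of_not_occupied (G : DGraph n m) (P : Matrix (Fin n) (Fin n) ℝ)
    (del : ℕ → Fin m → Fin (B + 1)) (t : ℕ) (i : Fin n) (v : Fin n ⊕ DelayNode m B)
    (hv : ¬ occupied G del t v) : Phat G P del (t + 1) (Sum.inl i) v = 0 := by
  rcases v with j | d
  · exact absurd trivial hv
  · have h : phi G del t d = 0 := (phi_eq_zero_or_one G del t d).resolve_right hv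
    simp [Phat, PFmat, h]

/-- `ε` is a uniform lower bound for the positive weights of the transition matrices. -/
def IsWeightBound (P : Matrix (Fin n) (Fin n) ℝ) (m B : ℕ) (ε : ℝ) : Prop :=
  0 < ε ∧ ε ≤ 1 ∧
    ∀ i j, 0 < P i j → ε ≤ P i j / ((Fintype.card (DelayNode m B) : ℝ) + 1)

lemma exists_isWeightBound (P : Matrix (Fin n) (Fin n) ℝ) (m B : ℕ) :
    ∃ ε, IsWeightBound P m B ε := by
  obtain ⟨ε, hε, h⟩ : ∃ ε : ℝ, 0 < ε ∧ ∀ p : Fin n × Fin n, 0 < P p.1 p.2 →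
      ε ≤ P p.1 p.2 / ((Fintype.card (DelayNode m B) : ℝ) + 1) := by
    have hev : ∀ᶠ ε : ℝ in nhdsWithin 0 (Set.Ioi 0), ∀ p : Fin n × Fin n, 0 < P p.1 p.2 →
        ε ≤ P p.1 p.2 / ((Fintype.card (DelayNode m B) : ℝ) + 1) := by
      rw [eventually_all]
      intro p
      by_cases hp : 0 < P p.1 p.2
      · have hq : 0 < P p.1 p.2 / ((Fintype.card (DelayNode m B) : ℝ) + 1) := by positivity
        filter_upwards [Ioc_mem_nhdsGT hq] with ε hε _ using hε.2
      · exact Eventually.of_forall fun _ h => absurd h hp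
    exact (hev.and self_mem_nhdsWithin).exists.imp fun ε h => ⟨h.2, h.1⟩
  exact ⟨min ε 1, lt_min hε one_pos, min_le_right _ _,
    fun i j hp => (min_le_left _ _).trans (h (i, j) hp)⟩

lemma IsWeightBound.le_div_denom {G : DGraph n m} {P : Matrix (Fin n) (Fin n) ℝ} {ε : ℝ}
    (hε : IsWeightBound P m B ε) (del : ℕ → Fin m → Fin (B + 1)) (t : ℕ) {i j : Fin n}
    (hP : 0 < P i j) (hd : 0 < denom G del t i j) : ε ≤ P i j / denom G del t i j :=
  (hε.2.2 i j hP).trans (div_le_div_of_nonneg_left hP.le hd (denom_le G del t i j))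

lemma IsWeightBound.le_Phat_self {G : DGraph n m} {P : Matrix (Fin n) (Fin n) ℝ} {ε : ℝ}
    (hV : G.Valid P) (hε : IsWeightBound P m B ε) (del : ℕ → Fin m → Fin (B + 1)) (t : ℕ)
    (i : Fin n) : ε ≤ Phat G P del t (Sum.inl i) (Sum.inl i) := by
  have hP : 0 < P i i := (hV.support i i).2 (Or.inl rfl)
  refine (hε.2.2 i i hP).trans ((div_le_self hP.le ?_).trans (le_P11_self hV del t i))
  simp

lemma IsWeightBound.le_Phat_direct {G : DGraph n m} {P : Matrix (Fin n) (Fin n) ℝ} {ε : ℝ}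
    (hV : G.Valid P) (hε : IsWeightBound P m B ε) (del : ℕ → Fin m → Fin (B + 1)) (t : ℕ)
    (e : Fin m) (he : (del t e).1 = 0) :
    ε ≤ Phat G P del t (Sum.inl (G.tgt e)) (Sum.inl (G.src e)) := by
  have hP : 0 < P (G.tgt e) (G.src e) := (hV.support _ _).2 (Or.inr ⟨e, rfl, rfl⟩)
  have hL : Lmat G del t (G.tgt e) (G.src e) = 1 := if_pos ⟨e, rfl, rfl, he⟩
  have hd : 0 < denom G del t (G.tgt e) (G.src e) := by
    rw [denom, hL]; positivity
  rw [Phat, fromBlocks_apply₁₁, P11_of_ne _ _ _ _ (hV.noSelf e).symm, PLmat, hL, one_mul]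
  exact hε.le_div_denom del t hP hd

lemma IsWeightBound.le_Phat_delayed {G : DGraph n m} {P : Matrix (Fin n) (Fin n) ℝ} {ε : ℝ}
    (hV : G.Valid P) (hε : IsWeightBound P m B ε) (del : ℕ → Fin m → Fin (B + 1)) (t : ℕ)
    (d : DelayNode m B) (hT : isTerminal d) (hd : phi G del t d = 1) :
    ε ≤ Phat G P del (t + 1) (Sum.inl (G.tgt (edgeOf d))) (Sum.inr d) := by
  have hP : 0 < P (G.tgt (edgeOf d)) (G.src (edgeOf d)) :=
    (hV.support _ _).2 (Or.inr ⟨_, rfl, rfl⟩)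
  have hw : 0 < wgt G del (t + 1) (G.tgt (edgeOf d)) (G.src (edgeOf d)) :=
    Finset.card_pos.2 ⟨d, by simp [hT, hd]⟩
  have hden : 0 < denom G del (t + 1) (G.tgt (edgeOf d)) (G.src (edgeOf d)) :=
    add_pos_of_pos_of_nonneg (Nat.cast_pos.2 hw) (Lmat_nonneg ..)
  have hJ : Jmat G B (G.tgt (edgeOf d)) d = 1 := if_pos ⟨rfl, hT⟩
  rw [Phat, fromBlocks_apply₁₂, PFmat, hJ, Nat.add_sub_cancel, hd, one_mul, one_mul]
  exact hε.le_div_denom del _ hP hden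

/-- `a` bounds from below the state of all occupied nodes at time `t`. -/
def OccLower (G : DGraph n m) (P : Matrix (Fin n) (Fin n) ℝ)
    (del : ℕ → Fin m → Fin (B + 1)) (x0 : Fin n → ℝ) (t : ℕ) (a : ℝ) : Prop :=
  ∀ v, occupied G del t v → a ≤ xhat G P del x0 t v

lemma OccLower.weight_mul_le {G : DGraph n m} {P : Matrix (Fin n) (Fin n) ℝ} (hV : G.Valid P)
    {del : ℕ → Fin m → Fin (B + 1)} {x0 : Fin n → ℝ} {t : ℕ} {a : ℝ}
    (ha : OccLower G P del x0 t a) (i : Fin n) (v : Fin n ⊕ DelayNode m B) :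
    Phat G P del (t + 1) (Sum.inl i) v * (xhat G P del x0 t v - a) ≤
      xhat G P del x0 (t + 1) (Sum.inl i) - a := by
  have hx : xhat G P del x0 (t + 1) (Sum.inl i) - a =
      ∑ v, Phat G P del (t + 1) (Sum.inl i) v * (xhat G P del x0 t v - a) := by
    simp only [mul_sub, Finset.sum_sub_distrib, ← Finset.sum_mul, sum_Phat_inl, one_mul]
    rfl
  rw [hx]
  refine Finset.single_le_sum (f := fun v => Phat G P del (t + 1) (Sum.inl i) v *
    (xhat G P del x0 t v - a)) (fun w _ => ?_) (Finset.mem_univ v)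
  by_cases hw : occupied G del t w
  · exact mul_nonneg (Phat_inl_nonneg hV ..) (sub_nonneg.2 (ha w hw))
  · simp [Phat_inl_of_not_occupied G P del t i w hw]

lemma OccLower.eps_mul_le {G : DGraph n m} {P : Matrix (Fin n) (Fin n) ℝ} (hV : G.Valid P)
    {del : ℕ → Fin m → Fin (B + 1)} {x0 : Fin n → ℝ} {t : ℕ} {a : ℝ}
    (ha : OccLower G P del x0 t a) {i : Fin n} {v : Fin n ⊕ DelayNode m B} {ε : ℝ}
    (hv : occupied G del t v) (hw : ε ≤ Phat G P del (t + 1) (Sum.inl i) v) :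
    ε * (xhat G P del x0 t v - a) ≤ xhat G P del x0 (t + 1) (Sum.inl i) - a :=
  (mul_le_mul_of_nonneg_right hw (sub_nonneg.2 (ha v hv))).trans (ha.weight_mul_le hV i v)

lemma OccLower.succ {G : DGraph n m} {P : Matrix (Fin n) (Fin n) ℝ} (hV : G.Valid P)
    {del : ℕ → Fin m → Fin (B + 1)} {x0 : Fin n → ℝ} {t : ℕ} {a : ℝ}
    (ha : OccLower G P del x0 t a) : OccLower G P del x0 (t + 1) a := by
  rintro (i | d) hv
  · have := ha.eps_mul_le hV (i := i) (v := Sum.inl i) trivial (Phat_inl_nonneg hV ..)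
    linarith
  · rw [occupied, phi_succ] at hv
    rw [xhat_succ_inr]
    split_ifs at hv ⊢ with h0 h1
    · exact ha (Sum.inl _) trivial
    · simp at hv
    · exact ha (Sum.inr _) hv

lemma OccLower.add {G : DGraph n m} {P : Matrix (Fin n) (Fin n) ℝ} (hV : G.Valid P)
    {del : ℕ → Fin m → Fin (B + 1)} {x0 : Fin n → ℝ} {t : ℕ} {a : ℝ}
    (ha : OccLower G P del x0 t a) (k : ℕ) : OccLower G P del x0 (t + k) a := by
  induction k with
  | zero => exact ha
  | succ k ih => exact ih.succ hV

lemma OccLower.pow_mul_le {G : DGraph n m} {P : Matrix (Fin n) (Fin n) ℝ} (hV : G.Valid P)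
    {del : ℕ → Fin m → Fin (B + 1)} {x0 : Fin n → ℝ} {t : ℕ} {a ε : ℝ}
    (hε : IsWeightBound P m B ε) (ha : OccLower G P del x0 t a) (i : Fin n) (k : ℕ) :
    ε ^ k * (xhat G P del x0 t (Sum.inl i) - a) ≤ xhat G P del x0 (t + k) (Sum.inl i) - a := by
  induction k with
  | zero => simp
  | succ k ih =>
    calc ε ^ (k + 1) * (xhat G P del x0 t (Sum.inl i) - a)
        = ε * (ε ^ k * (xhat G P del x0 t (Sum.inl i) - a)) := by ring
      _ ≤ ε * (xhat G P del x0 (t + k) (Sum.inl i) - a) :=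
        mul_le_mul_of_nonneg_left ih hε.1.le
      _ ≤ _ := (ha.add hV k).eps_mul_le hV trivial (hε.le_Phat_self hV del _ i)

/-- A message assigned a positive delay travels along its chain. -/
lemma message_in_chain (G : DGraph n m) (P : Matrix (Fin n) (Fin n) ℝ)
    (del : ℕ → Fin m → Fin (B + 1)) (x0 : Fin n → ℝ) (t : ℕ) (p : ℕ) :
    ∀ d : DelayNode m B, posIdx d = p → (del (t + 1) (edgeOf d)).1 = lenIdx d + 1 →
      phi G del (t + 1 + p) d = 1 ∧ xhat G P del x0 (t + 1 + p) (Sum.inr d) =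
        xhat G P del x0 t (Sum.inl (G.src (edgeOf d))) := by
  induction p with
  | zero =>
    intro d hp hd
    simp [phi_succ, xhat_succ_inr, hp, hd]
  | succ p ih =>
    intro d hp hd
    have hprev := ih (prevNode d) (by rw [posIdx_prevNode]; omega) hd
    rw [← add_assoc, phi_succ, xhat_succ_inr, if_neg (by omega), if_neg (by omega)]
    exact hprev

lemma OccLower.eps_mul_le_of_edge {G : DGraph n m} {P : Matrix (Fin n) (Fin n) ℝ}
    (hV : G.Valid P) {del : ℕ → Fin m → Fin (B + 1)} {x0 : Fin n → ℝ} {t : ℕ} {a ε : ℝ}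
    (hε : IsWeightBound P m B ε) (ha : OccLower G P del x0 t a) (e : Fin m) :
    ε * (xhat G P del x0 t (Sum.inl (G.src e)) - a) ≤
      xhat G P del x0 (t + 1 + (del (t + 1) e).1) (Sum.inl (G.tgt e)) - a := by
  rcases hk : (del (t + 1) e).1 with _ | l
  · exact ha.eps_mul_le hV trivial (hε.le_Phat_direct hV del (t + 1) e hk)
  · have hl : l < B := by have := (del (t + 1) e).2; omega
    let d : DelayNode m B := ⟨(e, ⟨l, hl⟩, ⟨l, hl⟩), le_rfl⟩
    obtain ⟨hphi, hx⟩ := message_in_chain G P del x0 t l d rfl hk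
    have h := (ha.add hV (1 + l)).eps_mul_le hV (i := G.tgt e) (v := Sum.inr d)
      (by rw [← add_assoc]; exact hphi)
      (hε.le_Phat_delayed hV del _ d rfl (by rw [← add_assoc]; exact hphi))
    rw [← add_assoc t 1 l, hx] at h
    exact h

lemma OccLower.pow_mul_le_of_edge {G : DGraph n m} {P : Matrix (Fin n) (Fin n) ℝ}
    (hV : G.Valid P) {del : ℕ → Fin m → Fin (B + 1)} {x0 : Fin n → ℝ} {t : ℕ} {a ε : ℝ}
    (hε : IsWeightBound P m B ε) (ha : OccLower G P del x0 t a) (e : Fin m) :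
    ε ^ (B + 1) * (xhat G P del x0 t (Sum.inl (G.src e)) - a) ≤
      xhat G P del x0 (t + (B + 1)) (Sum.inl (G.tgt e)) - a := by
  obtain ⟨r, hr⟩ : ∃ r, (del (t + 1) e).1 + r = B :=
    ⟨B - (del (t + 1) e).1, by have := (del (t + 1) e).2; omega⟩
  have h1 := ha.eps_mul_le_of_edge hV hε e
  have h2 := (ha.add hV (1 + (del (t + 1) e).1)).pow_mul_le hV hε (G.tgt e) r
  have ht : t + (1 + (del (t + 1) e).1) + r = t + (B + 1) := by omega
  rw [ht, ← add_assoc] at h2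
  have hx : 0 ≤ xhat G P del x0 t (Sum.inl (G.src e)) - a :=
    sub_nonneg.2 (ha (Sum.inl _) trivial)
  calc ε ^ (B + 1) * (xhat G P del x0 t (Sum.inl (G.src e)) - a)
      ≤ ε ^ (r + 1) * (xhat G P del x0 t (Sum.inl (G.src e)) - a) :=
        mul_le_mul_of_nonneg_right
          (pow_le_pow_of_le_one hε.1.le hε.2.1 (by omega)) hx
    _ = ε ^ r * (ε * (xhat G P del x0 t (Sum.inl (G.src e)) - a)) := by ring
    _ ≤ _ := (mul_le_mul_of_nonneg_left h1 (pow_nonneg hε.1.le r)).trans h2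

lemma exists_pow_mul_le_of_path {G : DGraph n m} {P : Matrix (Fin n) (Fin n) ℝ}
    (hV : G.Valid P) (del : ℕ → Fin m → Fin (B + 1)) {ε : ℝ} (hε : IsWeightBound P m B ε)
    (i j : Fin n) :
    ∃ k, ∀ x0 t a, OccLower G P del x0 t a →
      ε ^ k * (xhat G P del x0 t (Sum.inl i) - a) ≤
        xhat G P del x0 (t + k) (Sum.inl j) - a := by
  induction hV.connected i j with
  | refl => exact ⟨0, fun x0 t a _ => by simp⟩
  | tail _ hedge ih =>
    obtain ⟨k, hk⟩ := ih
    obtain ⟨e, rfl, rfl⟩ := hedge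
    refine ⟨k + (B + 1), fun x0 t a ha => ?_⟩
    have h := (ha.add hV k).pow_mul_le_of_edge hV hε e
    rw [← add_assoc t, pow_add, mul_comm (ε ^ k), mul_assoc]
    exact (mul_le_mul_of_nonneg_left (hk x0 t a ha) (pow_nonneg hε.1.le _)).trans h

/-- Uniform lift of the occupied minimum after a fixed number of steps. -/
lemma exists_uniform_lift {G : DGraph n m} {P : Matrix (Fin n) (Fin n) ℝ}
    (hV : G.Valid P) (del : ℕ → Fin m → Fin (B + 1)) :
    ∃ (T : ℕ) (c : ℝ), 0 < c ∧ ∀ x0 t a, OccLower G P del x0 t a → ∀ i : Fin n,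
      OccLower G P del x0 (t + T) (a + c * (xhat G P del x0 t (Sum.inl i) - a)) := by
  obtain ⟨ε, hε⟩ := exists_isWeightBound P m B
  choose k hk using exists_pow_mul_le_of_path hV del hε
  let K := Finset.univ.sup fun p : Fin n × Fin n => k p.1 p.2
  have hcompute : ∀ x0 t a, OccLower G P del x0 t a → ∀ (i j : Fin n) (s : ℕ), K ≤ s →
      ε ^ s * (xhat G P del x0 t (Sum.inl i) - a) ≤
        xhat G P del x0 (t + s) (Sum.inl j) - a := by
    intro x0 t a ha i j s hs
    have hle : k i j ≤ K :=
      Finset.le_sup (f := fun p : Fin n × Fin n => k p.1 p.2) (Finset.mem_univ (i, j))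
    obtain ⟨r, rfl⟩ := Nat.exists_eq_add_of_le (hle.trans hs)
    rw [← add_assoc t, pow_add, mul_comm (ε ^ k i j), mul_assoc]
    exact (mul_le_mul_of_nonneg_left (hk i j x0 t a ha) (pow_nonneg hε.1.le _)).trans
      ((ha.add hV _).pow_mul_le hV hε j r)
  refine ⟨K + B, ε ^ (K + B), pow_pos hε.1 _, fun x0 t a ha i => ?_⟩
  have hsent : ∀ (j : Fin n) (s : ℕ), K ≤ s → s ≤ K + B →
      a + ε ^ (K + B) * (xhat G P del x0 t (Sum.inl i) - a) ≤
        xhat G P del x0 (t + s) (Sum.inl j) := by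
    intro j s h1 h2
    have h3 := hcompute x0 t a ha i j s h1
    have h4 := mul_le_mul_of_nonneg_right (pow_le_pow_of_le_one hε.1.le hε.2.1 h2)
      (sub_nonneg.2 (ha (Sum.inl i) trivial))
    linarith
  rintro (j | d) hv
  · exact hsent j (K + B) (by omega) le_rfl
  · obtain ⟨q, hq, hx⟩ := exists_sent_of_phi_eq_one G P del x0 _ d hv
    have hp : posIdx d < B := d.val.2.2.2
    obtain ⟨s, rfl⟩ : ∃ s, q = t + s := ⟨q - t, by omega⟩
    rw [hx]
    exact hsent _ s (by omega) (by omega)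

lemma xhat_neg (G : DGraph n m) (P : Matrix (Fin n) (Fin n) ℝ)
    (del : ℕ → Fin m → Fin (B + 1)) (x0 : Fin n → ℝ) (t : ℕ) :
    xhat G P del (-x0) t = -xhat G P del x0 t := by
  induction t with
  | zero => ext (i | d) <;> simp [xhat]
  | succ t ih => rw [xhat, ih, mulVec_neg]; rfl

lemma occMax_eq_neg_occMin (G : DGraph n m) (P : Matrix (Fin n) (Fin n) ℝ)
    (del : ℕ → Fin m → Fin (B + 1)) (x0 : Fin n → ℝ) (t : ℕ) :
    occMax G P del x0 t = -occMin G P del (-x0) t := by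
  rw [occMax, occMin, Real.sInf_def, neg_neg]
  congr 1
  ext y
  simp [xhat_neg]

lemma le_occMin_iff (hn : 0 < n) (G : DGraph n m) (P : Matrix (Fin n) (Fin n) ℝ)
    (del : ℕ → Fin m → Fin (B + 1)) (x0 : Fin n → ℝ) (t : ℕ) (a : ℝ) :
    a ≤ occMin G P del x0 t ↔ OccLower G P del x0 t a := by
  have hfin : {y : ℝ | ∃ v, occupied G del t v ∧ xhat G P del x0 t v = y}.Finite :=
    (Set.toFinite _).image (xhat G P del x0 t)
  rw [occMin, le_csInf_iff hfin.bddBelow ⟨_, Sum.inl ⟨0, hn⟩, trivial, rfl⟩]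
  exact ⟨fun h v hv => h _ ⟨v, hv, rfl⟩, by rintro h _ ⟨v, hv, rfl⟩; exact h v hv⟩

end RandomDelay

open RandomDelay Filter in
/-- **Consensus among occupied nodes.**  For every realization of the delays and
every initial vector, there is a value `v` such that the state of every compute
node converges to `v`, and both the occupied maximum and the occupied minimum
converge to `v`. -/
theorem random_delay_consensus
    {n m B : ℕ} (hn : 0 < n) (hB : 1 ≤ B)
    (G : DGraph n m) (P : Matrix (Fin n) (Fin n) ℝ) (hV : G.Valid P)
    (del : ℕ → Fin m → Fin (B + 1)) (x0 : Fin n → ℝ) :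
    ∃ v : ℝ,
      (∀ i : Fin n,
        Tendsto (fun t => xhat G P del x0 t (Sum.inl i)) atTop (nhds v)) ∧
      Tendsto (fun t => occMax G P del x0 t) atTop (nhds v) ∧
      Tendsto (fun t => occMin G P del x0 t) atTop (nhds v) := by
  have hlower : ∀ y t, OccLower G P del y t (occMin G P del y t) := fun y t =>
    (le_occMin_iff hn G P del y t _).1 le_rfl
  have hmono : ∀ y, Monotone (occMin G P del y) := fun y => monotone_nat_of_le_succ fun t =>
    (le_occMin_iff hn G P del y _ _).2 ((hlower y t).succ hV)
  have hmin_le : ∀ y t i, occMin G P del y t ≤ xhat G P del y t (Sum.inl i) := fun y t i =>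
    hlower y t (Sum.inl i) trivial
  have hle_max : ∀ t i, xhat G P del x0 t (Sum.inl i) ≤ occMax G P del x0 t := fun t i => by
    have h := hmin_le (-x0) t i
    rw [xhat_neg, Pi.neg_apply] at h
    rw [occMax_eq_neg_occMin]
    linarith
  have hanti : Antitone (occMax G P del x0) := fun s t hst => by
    simpa only [occMax_eq_neg_occMin, neg_le_neg_iff] using hmono (-x0) hst
  have hgap : ∀ t, occMin G P del x0 t ≤ occMax G P del x0 t := fun t =>
    (hmin_le x0 t ⟨0, hn⟩).trans (hle_max t ⟨0, hn⟩)
  have hmin := tendsto_atTop_ciSup (hmono x0)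
    ⟨occMax G P del x0 0, by rintro _ ⟨t, rfl⟩; exact (hgap t).trans (hanti (Nat.zero_le t))⟩
  have hmax := tendsto_atTop_ciInf hanti
    ⟨occMin G P del x0 0, by rintro _ ⟨t, rfl⟩; exact (hmono x0 (Nat.zero_le t)).trans (hgap t)⟩
  set p := ⨆ t, occMin G P del x0 t
  set q := ⨅ t, occMax G P del x0 t
  obtain ⟨T, c, hc, hlift⟩ := exists_uniform_lift hV del
  have hcontract : ∀ t, occMax G P del x0 (t + T) - occMin G P del x0 (t + T) ≤
      (1 - c) * (occMax G P del x0 t - occMin G P del x0 t) := fun t => by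
    have h1 := (le_occMin_iff hn G P del _ _ _).2 (hlift x0 t _ (hlower x0 t) ⟨0, hn⟩)
    have h2 := (le_occMin_iff hn G P del _ _ _).2 (hlift (-x0) t _ (hlower (-x0) t) ⟨0, hn⟩)
    rw [xhat_neg, Pi.neg_apply] at h2
    rw [occMax_eq_neg_occMin, occMax_eq_neg_occMin]
    linarith
  have hlim : q - p ≤ (1 - c) * (q - p) :=
    le_of_tendsto_of_tendsto' ((tendsto_add_atTop_iff_nat T).2 (hmax.sub hmin))
      ((hmax.sub hmin).const_mul _) hcontract
  have hpq : p ≤ q := le_of_tendsto_of_tendsto' hmin hmax hgap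
  have heq : q = p := by nlinarith
  rw [heq] at hmax
  exact ⟨p, fun i => tendsto_of_tendsto_of_tendsto_of_le_of_le hmin hmax
    (fun t => hmin_le x0 t i) (fun t => hle_max t i), hmax, hmin⟩
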